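/- Fix r > 0 and set k_r = (1−r)/3. (i) If 0 < r < 1, let m_0(r) be the unique t ∈ (0,1/2) with h(t) = r; then m_0(r) ∈ (0,k_r), f_r is strictly decreasing on (0,m_0(r)), strictly increasing on (m_0(r),k_r), and strictly increasing on (k_r,1/2); moreover f_r(t) → +∞ as t → 0⁺, as t → k_r⁻, and as t → (1/2)⁻, and f_r(t) → −∞ as t → k_r⁺. (ii) If r ≥ 1, then f_r is strictly increasing on (0,1/2), with f_r(t) → −∞ as t → 0⁺ and f_r(t) → +∞ as t → (1/2)⁻. -/

import Mathlib

/-!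
Write `L(t) = log((1−2t)/t)`, so that `L'(t) = −1/(t(1−2t))`. The quotient rule gives the identity
`f_r'(t) = (2/3) (r − h(t)) / (t(1−2t)(1−r−3t)²)` (`hasDerivAt_frfun`), so the monotonicity of `f_r`
is decided by the sign of `r − h`.

Since `h'(t) = −3(1−4t)L(t)`, the function `h` decreases on `(0,1/4]`, increases on `[1/4,1/3]` up to
`h(1/3) = 0`, and decreases again on `[1/3,1/2)`. Hence `h ≤ 0` on `[1/4,1/2)`, and a solution `m₀` of
`h = r > 0` lies in `(0,1/4)`, with `h > r` to its left and `h < r` to its right. As `L(m₀) > 0`, the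
equation `h(m₀) = r` also yields `r < 1 − 3m₀`, that is `m₀ < k_r`. For `r ≥ 1` the elementary bound
`h < 1` on `(0,1/2)` suffices. The limits follow from `L → +∞` at `0⁺` and `L → −∞` at `(1/2)⁻`,
together with the sign of `1 − r − 3t`.
-/

/-- `h(t) = −3t(1−2t) log((1−2t)/t) − 3t + 1`. -/
noncomputable def hfun (t : ℝ) : ℝ :=
  -3 * t * (1 - 2 * t) * Real.log ((1 - 2 * t) / t) - 3 * t + 1

/-- `f_r(t) = (2/(3(1−r−3t))) log((1−2t)/t)`. -/
noncomputable def frfun (r t : ℝ) : ℝ :=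
  2 / (3 * (1 - r - 3 * t)) * Real.log ((1 - 2 * t) / t)

open Set Filter Topology

lemma hasDerivAt_logRatio {t : ℝ} (h0 : 0 < t) (h1 : t < 1 / 2) :
    HasDerivAt (fun t : ℝ => Real.log ((1 - 2 * t) / t)) (-1 / (t * (1 - 2 * t))) t := by
  have h2 : 0 < 1 - 2 * t := by linarith
  have hn : HasDerivAt (fun t : ℝ => 1 - 2 * t) (-2) t := by
    simpa using ((hasDerivAt_id t).const_mul 2).const_sub 1
  have := (hn.div (hasDerivAt_id t) h0.ne').log (div_pos h2 h0).ne'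
  refine this.congr_deriv ?_
  simp only [id, Pi.div_apply]
  field_simp
  ring

lemma logRatio_pos {t : ℝ} (h0 : 0 < t) (h1 : t < 1 / 3) : 0 < Real.log ((1 - 2 * t) / t) :=
  Real.log_pos (by rw [lt_div_iff₀ h0]; linarith)

lemma logRatio_neg {t : ℝ} (h0 : 1 / 3 < t) (h1 : t < 1 / 2) : Real.log ((1 - 2 * t) / t) < 0 :=
  Real.log_neg (div_pos (by linarith) (by linarith))
    (by rw [div_lt_one (by linarith)]; linarith)

lemma hasDerivAt_hfun {t : ℝ} (h0 : 0 < t) (h1 : t < 1 / 2) :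
    HasDerivAt hfun (-3 * (1 - 4 * t) * Real.log ((1 - 2 * t) / t)) t := by
  have h2 : 1 - 2 * t ≠ 0 := by linarith
  have hn : HasDerivAt (fun t : ℝ => 1 - 2 * t) (-2) t := by
    simpa using ((hasDerivAt_id t).const_mul 2).const_sub 1
  have ht : ∀ c : ℝ, HasDerivAt (fun t : ℝ => c * t) c t := fun c => by
    simpa using (hasDerivAt_id t).const_mul c
  have := ((((ht (-3)).mul hn).mul (hasDerivAt_logRatio h0 h1)).sub (ht 3)).add_const 1
  refine this.congr_deriv ?_
  simp only [Pi.mul_apply]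
  field_simp
  ring

lemma hasDerivAt_frfun {r t : ℝ} (h0 : 0 < t) (h1 : t < 1 / 2) (hk : 1 - r - 3 * t ≠ 0) :
    HasDerivAt (frfun r)
      (2 / 3 * (r - hfun t) / (t * (1 - 2 * t) * (1 - r - 3 * t) ^ 2)) t := by
  have h2 : 1 - 2 * t ≠ 0 := by linarith
  have hd : HasDerivAt (fun t : ℝ => 3 * (1 - r - 3 * t)) (-9) t := by
    refine ((((hasDerivAt_id t).const_mul 3).const_sub (1 - r)).const_mul 3).congr_deriv ?_
    norm_num
  have := (((hasDerivAt_const t (2 : ℝ)).div hd (mul_ne_zero three_ne_zero hk))).mul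
    (hasDerivAt_logRatio h0 h1)
  refine this.congr_deriv ?_
  simp only [hfun, Pi.div_apply]
  generalize Real.log ((1 - 2 * t) / t) = l
  rw [div_mul_eq_mul_div, div_mul_div_comm, div_add_div _ _ (by positivity) (by positivity),
    div_eq_div_iff (by positivity) (by positivity)]
  ring

lemma strictAntiOn_hfun_left : StrictAntiOn hfun (Ioc 0 (1 / 4)) := by
  refine strictAntiOn_of_deriv_neg (convex_Ioc _ _) (fun t ht => ?_) (fun t ht => ?_)
  · exact (hasDerivAt_hfun ht.1 (by linarith [ht.2])).continuousAt.continuousWithinAt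
  · rw [interior_Ioc] at ht
    rw [(hasDerivAt_hfun ht.1 (by linarith [ht.2])).deriv]
    have := logRatio_pos ht.1 (by linarith [ht.2])
    nlinarith [ht.2, mul_pos (sub_pos.2 ht.2) this]

lemma hfun_third : hfun (1 / 3) = 0 := by
  norm_num [hfun]

lemma hfun_nonpos {t : ℝ} (h0 : 1 / 4 ≤ t) (h1 : t < 1 / 2) : hfun t ≤ 0 := by
  rw [← hfun_third]
  rcases le_total t (1 / 3) with h | h
  · have hm : MonotoneOn hfun (Icc (1 / 4) (1 / 3)) := by
      refine monotoneOn_of_deriv_nonneg (convex_Icc _ _) (fun t ht => ?_) (fun t ht => ?_)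
        (fun t ht => ?_)
      · exact (hasDerivAt_hfun (by linarith [ht.1])
          (by linarith [ht.2])).continuousAt.continuousWithinAt
      · rw [interior_Icc] at ht
        exact (hasDerivAt_hfun (by linarith [ht.1])
          (by linarith [ht.2])).differentiableAt.differentiableWithinAt
      · rw [interior_Icc] at ht
        rw [(hasDerivAt_hfun (by linarith [ht.1]) (by linarith [ht.2])).deriv]
        have := logRatio_pos (by linarith [ht.1]) ht.2
        nlinarith [mul_pos (sub_pos.2 ht.1) this]
    exact hm ⟨h0, h⟩ ⟨by norm_num, le_rfl⟩ h
  · have hm : AntitoneOn hfun (Ico (1 / 3) (1 / 2)) := by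
      refine antitoneOn_of_deriv_nonpos (convex_Ico _ _) (fun t ht => ?_) (fun t ht => ?_)
        (fun t ht => ?_)
      · exact (hasDerivAt_hfun (by linarith [ht.1])
          (by linarith [ht.2])).continuousAt.continuousWithinAt
      · rw [interior_Ico] at ht
        exact (hasDerivAt_hfun (by linarith [ht.1])
          (by linarith [ht.2])).differentiableAt.differentiableWithinAt
      · rw [interior_Ico] at ht
        rw [(hasDerivAt_hfun (by linarith [ht.1]) (by linarith [ht.2])).deriv]
        have := logRatio_neg ht.1 ht.2
        nlinarith [mul_pos (show 0 < 4 * t - 1 by linarith [ht.1]) (neg_pos.2 this)]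
    exact hm ⟨le_rfl, by norm_num⟩ ⟨h, h1⟩ h

lemma hfun_lt_one {t : ℝ} (h0 : 0 < t) (h1 : t < 1 / 2) : hfun t < 1 := by
  have h2 : 0 < 1 - 2 * t := by linarith
  have hx : 0 < (1 - 2 * t) / t := div_pos h2 h0
  -- `log x ≥ 1 - 1/x` at `x = (1-2t)/t` reads `(1-2t) L(t) ≥ 1 - 3t`.
  have hl : 1 - 3 * t ≤ (1 - 2 * t) * Real.log ((1 - 2 * t) / t) := by
    have := mul_le_mul_of_nonneg_left (Real.one_sub_inv_le_log_of_pos hx) h2.le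
    rw [inv_div, mul_sub, mul_div_cancel₀ _ h2.ne'] at this
    linarith
  have := mul_le_mul_of_nonneg_left hl h0.le
  unfold hfun
  nlinarith

lemma strictMonoOn_frfun {r a b : ℝ} (ha : 0 ≤ a) (hb : b ≤ 1 / 2)
    (hk : ∀ t ∈ Ioo a b, 1 - r - 3 * t ≠ 0) (hh : ∀ t ∈ Ioo a b, hfun t < r) :
    StrictMonoOn (frfun r) (Ioo a b) := by
  have hd : ∀ t ∈ Ioo a b, _ := fun t ht =>
    hasDerivAt_frfun (r := r) (ha.trans_lt ht.1) (ht.2.trans_le hb) (hk t ht)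
  refine strictMonoOn_of_deriv_pos (convex_Ioo _ _)
    (fun t ht => (hd t ht).continuousAt.continuousWithinAt) (fun t ht => ?_)
  rw [interior_Ioo] at ht
  rw [(hd t ht).deriv]
  have h0 : 0 < t := ha.trans_lt ht.1
  have h1 : 0 < 1 - 2 * t := by linarith [ht.2]
  have h2 : 0 < r - hfun t := sub_pos.2 (hh t ht)
  have h3 := hk t ht
  positivity

lemma strictAntiOn_frfun {r a b : ℝ} (ha : 0 ≤ a) (hb : b ≤ 1 / 2)
    (hk : ∀ t ∈ Ioo a b, 1 - r - 3 * t ≠ 0) (hh : ∀ t ∈ Ioo a b, r < hfun t) :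
    StrictAntiOn (frfun r) (Ioo a b) := by
  have hd : ∀ t ∈ Ioo a b, _ := fun t ht =>
    hasDerivAt_frfun (r := r) (ha.trans_lt ht.1) (ht.2.trans_le hb) (hk t ht)
  refine strictAntiOn_of_deriv_neg (convex_Ioo _ _)
    (fun t ht => (hd t ht).continuousAt.continuousWithinAt) (fun t ht => ?_)
  rw [interior_Ioo] at ht
  rw [(hd t ht).deriv]
  have h0 : 0 < t := ha.trans_lt ht.1
  have h1 : 0 < 1 - 2 * t := by linarith [ht.2]
  have h2 : r - hfun t < 0 := sub_neg.2 (hh t ht)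
  have h3 := hk t ht
  exact div_neg_of_neg_of_pos (by linarith) (by positivity)

lemma tendsto_logRatio_zero :
    Tendsto (fun t : ℝ => Real.log ((1 - 2 * t) / t)) (𝓝[>] 0) atTop := by
  refine Real.tendsto_log_atTop.comp ?_
  have h : Tendsto (fun t : ℝ => 1 - 2 * t) (𝓝[>] 0) (𝓝 1) :=
    tendsto_nhdsWithin_of_tendsto_nhds (Continuous.tendsto' (by fun_prop) _ _ (by norm_num))
  simpa only [div_eq_mul_inv] using h.pos_mul_atTop one_pos tendsto_inv_nhdsGT_zero

lemma tendsto_logRatio_half :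
    Tendsto (fun t : ℝ => Real.log ((1 - 2 * t) / t)) (𝓝[<] (1 / 2)) atBot := by
  refine Real.tendsto_log_nhdsGT_zero.comp (tendsto_nhdsWithin_iff.2 ⟨?_, ?_⟩)
  · have hc : ContinuousAt (fun t : ℝ => (1 - 2 * t) / t) (1 / 2) :=
      ContinuousAt.div (by fun_prop) (by fun_prop) (by norm_num)
    have := hc.tendsto
    norm_num at this
    exact tendsto_nhdsWithin_of_tendsto_nhds (by norm_num; exact this)
  · filter_upwards [Ioo_mem_nhdsLT (show (0 : ℝ) < 1 / 2 by norm_num)] with t ht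
    exact div_pos (by linarith [ht.2]) ht.1

lemma tendsto_coeff {r a : ℝ} (ha : 1 - r - 3 * a ≠ 0) :
    Tendsto (fun t : ℝ => 2 / (3 * (1 - r - 3 * t))) (𝓝 a) (𝓝 (2 / (3 * (1 - r - 3 * a)))) := by
  have : ContinuousAt (fun t : ℝ => 2 / (3 * (1 - r - 3 * t))) a :=
    ContinuousAt.div (by fun_prop) (by fun_prop) (mul_ne_zero three_ne_zero ha)
  exact this.tendsto

lemma tendsto_coeff_left (r : ℝ) :
    Tendsto (fun t : ℝ => 2 / (3 * (1 - r - 3 * t))) (𝓝[<] ((1 - r) / 3)) atTop := by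
  simp only [div_eq_mul_inv (2 : ℝ)]
  refine Tendsto.const_mul_atTop two_pos
    (tendsto_inv_nhdsGT_zero.comp (tendsto_nhdsWithin_iff.2 ⟨?_, ?_⟩))
  · exact tendsto_nhdsWithin_of_tendsto_nhds (Continuous.tendsto' (by fun_prop) _ _ (by ring))
  · filter_upwards [self_mem_nhdsWithin] with t ht
    simp only [mem_Iio, mem_Ioi] at *
    linarith

lemma tendsto_coeff_right (r : ℝ) :
    Tendsto (fun t : ℝ => 2 / (3 * (1 - r - 3 * t))) (𝓝[>] ((1 - r) / 3)) atBot := by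
  simp only [div_eq_mul_inv (2 : ℝ)]
  refine Tendsto.const_mul_atBot two_pos
    (tendsto_inv_nhdsLT_zero.comp (tendsto_nhdsWithin_iff.2 ⟨?_, ?_⟩))
  · exact tendsto_nhdsWithin_of_tendsto_nhds (Continuous.tendsto' (by fun_prop) _ _ (by ring))
  · filter_upwards [self_mem_nhdsWithin] with t ht
    simp only [mem_Iio, mem_Ioi] at *
    linarith

lemma tendsto_frfun_half {r : ℝ} (hr : 0 < r) :
    Tendsto (frfun r) (𝓝[<] (1 / 2)) atTop :=
  (tendsto_nhdsWithin_of_tendsto_nhds (tendsto_coeff (by linarith))).neg_mul_atBot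
    (div_neg_of_pos_of_neg two_pos (by linarith)) tendsto_logRatio_half

/-- monotonicity and limit behavior of `f_r` with `k_r = (1−r)/3`.
(i) For `0 < r < 1`, with `m₀(r)` the unique solution of `h(t) = r` in `(0,1/2)`:
`m₀(r) < k_r`, `f_r` is strictly decreasing on `(0,m₀(r))`, strictly increasing on
`(m₀(r),k_r)` and on `(k_r,1/2)`, `f_r → +∞` at `0⁺`, `k_r⁻` and `(1/2)⁻`, and
`f_r → −∞` at `k_r⁺`. (ii) For `r ≥ 1`, `f_r` is strictly increasing on `(0,1/2)`, with
`f_r → −∞` at `0⁺` and `f_r → +∞` at `(1/2)⁻`. -/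
theorem frfun_monotonicity_and_limits (r : ℝ) (hr : 0 < r) :
    (r < 1 → ∀ m0 ∈ Set.Ioo (0 : ℝ) (1 / 2), hfun m0 = r →
      m0 < (1 - r) / 3 ∧
      StrictAntiOn (frfun r) (Set.Ioo 0 m0) ∧
      StrictMonoOn (frfun r) (Set.Ioo m0 ((1 - r) / 3)) ∧
      StrictMonoOn (frfun r) (Set.Ioo ((1 - r) / 3) (1 / 2)) ∧
      Filter.Tendsto (frfun r) (nhdsWithin 0 (Set.Ioi 0)) Filter.atTop ∧
      Filter.Tendsto (frfun r) (nhdsWithin ((1 - r) / 3) (Set.Iio ((1 - r) / 3)))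
        Filter.atTop ∧
      Filter.Tendsto (frfun r) (nhdsWithin (1 / 2) (Set.Iio (1 / 2))) Filter.atTop ∧
      Filter.Tendsto (frfun r) (nhdsWithin ((1 - r) / 3) (Set.Ioi ((1 - r) / 3)))
        Filter.atBot) ∧
    (1 ≤ r →
      StrictMonoOn (frfun r) (Set.Ioo (0 : ℝ) (1 / 2)) ∧
      Filter.Tendsto (frfun r) (nhdsWithin 0 (Set.Ioi 0)) Filter.atBot ∧
      Filter.Tendsto (frfun r) (nhdsWithin (1 / 2) (Set.Iio (1 / 2))) Filter.atTop) := by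
  refine ⟨fun hr1 m0 hm hm0 => ?_, fun hr1 => ?_⟩
  · have hm4 : m0 < 1 / 4 := by
      by_contra! hcon
      linarith [hfun_nonpos hcon hm.2]
    have hL := logRatio_pos hm.1 (by linarith)
    have hmk : m0 < (1 - r) / 3 := by
      have h2 : 0 < 1 - 2 * m0 := by linarith
      have := mul_pos (mul_pos hm.1 h2) hL
      unfold hfun at hm0
      linarith
    have hlt : ∀ t, m0 < t → t < 1 / 2 → hfun t < r := fun t h0 h1 => by
      rcases le_total t (1 / 4) with h | h
      · rw [← hm0]
        exact strictAntiOn_hfun_left ⟨hm.1, hm4.le⟩ ⟨hm.1.trans h0, h⟩ h0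
      · exact (hfun_nonpos h h1).trans_lt hr
    have hLk : Tendsto (fun t : ℝ => Real.log ((1 - 2 * t) / t)) (𝓝 ((1 - r) / 3))
        (𝓝 (Real.log ((1 - 2 * ((1 - r) / 3)) / ((1 - r) / 3)))) :=
      (hasDerivAt_logRatio (by linarith) (by linarith)).continuousAt.tendsto
    have hLkpos := logRatio_pos (t := (1 - r) / 3) (by linarith) (by linarith)
    refine ⟨hmk, ?_, ?_, ?_, ?_, ?_, tendsto_frfun_half hr, ?_⟩
    · refine strictAntiOn_frfun le_rfl hm.2.le (fun t ht => by linarith [ht.2]) (fun t ht => ?_)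
      rw [← hm0]
      exact strictAntiOn_hfun_left ⟨ht.1, (ht.2.trans hm4).le⟩ ⟨hm.1, hm4.le⟩ ht.2
    · exact strictMonoOn_frfun hm.1.le (by linarith) (fun t ht => by linarith [ht.2])
        (fun t ht => hlt t ht.1 (by linarith [ht.2]))
    · exact strictMonoOn_frfun (by linarith) le_rfl (fun t ht => by linarith [ht.1])
        (fun t ht => hlt t (hmk.trans ht.1) ht.2)
    · exact (tendsto_nhdsWithin_of_tendsto_nhds (tendsto_coeff (by linarith))).pos_mul_atTop
        (div_pos two_pos (by linarith)) tendsto_logRatio_zero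
    · exact (tendsto_coeff_left r).atTop_mul_pos hLkpos
        (tendsto_nhdsWithin_of_tendsto_nhds hLk)
    · exact (tendsto_coeff_right r).atBot_mul_pos hLkpos
        (tendsto_nhdsWithin_of_tendsto_nhds hLk)
  · refine ⟨strictMonoOn_frfun le_rfl le_rfl (fun t ht => by linarith [ht.1])
      (fun t ht => (hfun_lt_one ht.1 ht.2).trans_le hr1), ?_, tendsto_frfun_half hr⟩
    rcases hr1.eq_or_lt with rfl | hr1
    · -- Here `k_r = 0`, so the coefficient itself tends to `-∞` at `0⁺`.
      have := tendsto_coeff_right 1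
      rw [sub_self, zero_div] at this
      refine Tendsto.atBot_mul_atTop₀ ?_ tendsto_logRatio_zero
      simpa using this
    · exact (tendsto_nhdsWithin_of_tendsto_nhds (tendsto_coeff (by linarith))).neg_mul_atTop
        (div_neg_of_pos_of_neg two_pos (by linarith)) tendsto_logRatio_zero
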